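/- Every parabolic subalgebra q of a finite-dimensional complex reductive Lie algebra g is equal to the normalizer in g of its own nilpotent radical. -/

import Mathlib

open Module

namespace ManinPaper

variable (g : Type*) [LieRing g] [LieAlgebra ℝ g] [LieAlgebra ℂ g] [IsScalarTower ℝ ℂ g]
  [FiniteDimensional ℂ g] [FiniteDimensional ℝ g]

/-! ### Subalgebras of `g`, given as subspaces -/

def IsSub (V : Submodule ℂ g) : Prop := ∀ x ∈ V, ∀ y ∈ V, ⁅x, y⁆ ∈ V

def IsSubR (V : Submodule ℝ g) : Prop := ∀ x ∈ V, ∀ y ∈ V, ⁅x, y⁆ ∈ V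

/-- The span of all brackets. -/
def bracketSpan (V W : Submodule ℂ g) : Submodule ℂ g :=
  Submodule.span ℂ {z : g | ∃ x ∈ V, ∃ y ∈ W, ⁅x, y⁆ = z}

def bracketSpanR (V W : Submodule ℝ g) : Submodule ℝ g :=
  Submodule.span ℝ {z : g | ∃ x ∈ V, ∃ y ∈ W, ⁅x, y⁆ = z}

/-- Derived series of a subalgebra (given as a subspace). -/
def derivedSub (V : Submodule ℂ g) : ℕ → Submodule ℂ g
  | 0 => V
  | k + 1 => bracketSpan g (derivedSub V k) (derivedSub V k)

def derivedSubR (V : Submodule ℝ g) : ℕ → Submodule ℝ g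
  | 0 => V
  | k + 1 => bracketSpanR g (derivedSubR V k) (derivedSubR V k)

/-- Lower central series. -/
def lcsSub (V : Submodule ℂ g) : ℕ → Submodule ℂ g
  | 0 => V
  | k + 1 => bracketSpan g V (lcsSub V k)

def lcsSubR (V : Submodule ℝ g) : ℕ → Submodule ℝ g
  | 0 => V
  | k + 1 => bracketSpanR g V (lcsSubR V k)

def SolvableSub (V : Submodule ℂ g) : Prop := ∃ k, derivedSub g V k = ⊥

def SolvableSubR (V : Submodule ℝ g) : Prop := ∃ k, derivedSubR g V k = ⊥

def NilpotentSub (V : Submodule ℂ g) : Prop := ∃ k, lcsSub g V k = ⊥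

def NilpotentSubR (V : Submodule ℝ g) : Prop := ∃ k, lcsSubR g V k = ⊥

/-- `J` is an ideal of the subalgebra `V`. -/
def IsIdealIn (V J : Submodule ℂ g) : Prop :=
  J ≤ V ∧ ∀ x ∈ V, ∀ y ∈ J, ⁅x, y⁆ ∈ J

def IsIdealInR (V J : Submodule ℝ g) : Prop :=
  J ≤ V ∧ ∀ x ∈ V, ∀ y ∈ J, ⁅x, y⁆ ∈ J

/-- The radical (largest solvable ideal) of the subalgebra `V`. -/
def radicalIn (V : Submodule ℂ g) : Submodule ℂ g :=
  sSup {J : Submodule ℂ g | IsIdealIn g V J ∧ SolvableSub g J}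

def radicalInR (V : Submodule ℝ g) : Submodule ℝ g :=
  sSup {J : Submodule ℝ g | IsIdealInR g V J ∧ SolvableSubR g J}

/-- The nilpotent radical `[V,V] ⊓ rad V` of the subalgebra `V`; by Bourbaki, Ch. I §5.3,
this is the largest ideal of `V` whose elements act nilpotently in every finite-dimensional
representation of `V`. -/
def nilpotentRadIn (V : Submodule ℂ g) : Submodule ℂ g :=
  bracketSpan g V V ⊓ radicalIn g V

def nilpotentRadInR (V : Submodule ℝ g) : Submodule ℝ g :=
  bracketSpanR g V V ⊓ radicalInR g V

/-- The centre of the subalgebra `V`. -/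
def centerIn (V : Submodule ℂ g) : Submodule ℂ g where
  carrier := {z : g | z ∈ V ∧ ∀ y ∈ V, ⁅z, y⁆ = 0}
  zero_mem' := ⟨V.zero_mem, fun y _ => zero_lie y⟩
  add_mem' := by
    rintro a b ⟨ha, ha'⟩ ⟨hb, hb'⟩
    exact ⟨V.add_mem ha hb, fun y hy => by rw [add_lie, ha' y hy, hb' y hy, add_zero]⟩
  smul_mem' := by
    rintro c x ⟨hx, hx'⟩
    exact ⟨V.smul_mem c hx, fun y hy => by rw [smul_lie, hx' y hy, smul_zero]⟩

/-- The centralizer of a set. -/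
def centralizerOf (s : Set g) : Submodule ℂ g where
  carrier := {z : g | ∀ y ∈ s, ⁅z, y⁆ = 0}
  zero_mem' := fun y _ => zero_lie y
  add_mem' := by
    rintro a b ha hb
    exact fun y hy => by rw [add_lie, ha y hy, hb y hy, add_zero]
  smul_mem' := by
    rintro c x hx
    exact fun y hy => by rw [smul_lie, hx y hy, smul_zero]

/-- The derived (sub)algebra of `V`, as a subspace of `g`. -/
def derivedOf (V : Submodule ℂ g) : Submodule ℂ g := bracketSpan g V V

/-- A semisimple complex subalgebra: a subalgebra with trivial radical. -/
def SemisimpleSub (V : Submodule ℂ g) : Prop := IsSub g V ∧ radicalIn g V = ⊥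

/-- Borel subalgebras of the subalgebra `W`: maximal solvable subalgebras of `W`. -/
def IsBorelIn (W b : Submodule ℂ g) : Prop :=
  IsSub g b ∧ b ≤ W ∧ SolvableSub g b ∧
    ∀ b' : Submodule ℂ g, IsSub g b' → b' ≤ W → SolvableSub g b' → b ≤ b' → b' = b

/-- Parabolic subalgebras of `W`: subalgebras of `W` containing a Borel subalgebra of `W`. -/
def IsParabolicIn (W p : Submodule ℂ g) : Prop :=
  IsSub g p ∧ p ≤ W ∧ ∃ b : Submodule ℂ g, IsBorelIn g W b ∧ b ≤ p

/-- `l` is reductive in `W`: every `l`-invariant subspace of `W` admits an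
`l`-invariant complement in `W`. -/
def ReductiveIn (W l : Submodule ℂ g) : Prop :=
  ∀ U : Submodule ℂ g, U ≤ W → (∀ x ∈ l, ∀ u ∈ U, ⁅x, u⁆ ∈ U) →
    ∃ U' : Submodule ℂ g, U' ≤ W ∧ (∀ x ∈ l, ∀ u ∈ U', ⁅x, u⁆ ∈ U') ∧
      U ⊓ U' = ⊥ ∧ U ⊔ U' = W

/-- A Langlands decomposition `p = l ⊕ n` of the parabolic subalgebra `p` of `W`, where
`n` is the nilpotent radical of `p` and `l` is a subalgebra reductive in `W`. -/
def IsLanglandsIn (W p l : Submodule ℂ g) : Prop :=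
  IsSub g l ∧ l ≤ p ∧ ReductiveIn g W l ∧
    l ⊓ nilpotentRadIn g p = ⊥ ∧ l ⊔ nilpotentRadIn g p = p

/-- Cartan subalgebras of `W`: nilpotent and self-normalizing in `W`. -/
def IsCartanIn (W j : Submodule ℂ g) : Prop :=
  IsSub g j ∧ j ≤ W ∧ NilpotentSub g j ∧
    ∀ x ∈ W, (∀ y ∈ j, ⁅x, y⁆ ∈ j) → x ∈ j

def IsCartanInR (W j : Submodule ℝ g) : Prop :=
  IsSubR g j ∧ j ≤ W ∧ NilpotentSubR g j ∧
    ∀ x ∈ W, (∀ y ∈ j, ⁅x, y⁆ ∈ j) → x ∈ j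

/-- `g` is reductive: its radical coincides with its centre. -/
def IsReductive : Prop := radicalIn g ⊤ = centerIn g ⊤

/-- `b'` is the Borel subalgebra of `W` opposite to `b` relative to the Cartan
subalgebra `j`. -/
def IsOppositeBorelIn (W j b b' : Submodule ℂ g) : Prop :=
  IsBorelIn g W b' ∧ j ≤ b' ∧ b ⊓ b' = j

/-!
Let `κ` be the Killing form of `L` and `Q` a subalgebra containing a Borel subalgebra `B`.

Lie's theorem and Cartan's criterion give `B^⊥ ≤ B`: if `u ⟂ B` spans a `B`-stable line modulo `B`,
then `κ` vanishes on `(P, [P, P])` for `P = K u + B`, so `P` is solvable and `u ∈ B` by maximality.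
Moreover `Q` is its own normalizer, because an ideal containing a Borel subalgebra is everything:
modulo the radical it has a complementary ideal, which normalizes the Borel subalgebra.

Hence `Q^⊥ ≤ B^⊥ ≤ B` is a solvable ideal of `Q`. An element orthogonal to `[Q, Q]` brackets `Q`
into `Q^⊥ ≤ Q` and so lies in `Q`; dually, `Q^⊥ ≤ [Q, Q] + ker κ`. Together, `Q^⊥ ≤ n + ker κ` for
the nilpotent radical `n = [Q, Q] ∩ rad Q`. If `N` is the normalizer of `n`, then `n` is a solvable
ideal of `N`, so `κ([N, N], n) = 0` by Lie's theorem. Therefore `[N, N] ≤ Q^⊥⊥ = Q`, and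
`N ≤ normalizer Q = Q`.
-/

open LieAlgebra LieModule

section Solvable

variable {R L L' : Type*} [CommRing R] [LieRing L] [LieAlgebra R L] [LieRing L'] [LieAlgebra R L']

theorem isSolvable_of_le {H K : LieSubalgebra R L} [IsSolvable K] (h : H ≤ K) : IsSolvable H :=
  (LieSubalgebra.inclusion_injective h).lieAlgebra_isSolvable

theorem isSolvable_of_map_le {f : L →ₗ⁅R⁆ L'} (hf : Function.Injective f) {H : LieSubalgebra R L}
    {K : LieSubalgebra R L'} [IsSolvable K] (h : H.map f ≤ K) : IsSolvable H :=
  have : IsSolvable (H.map f) := isSolvable_of_le h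
  (solvable_iff_equiv_solvable (LieSubalgebra.equivMapOfInjective f H hf)).mpr this

theorem isSolvable_map (f : L →ₗ⁅R⁆ L') (H : LieSubalgebra R L) [IsSolvable H] :
    IsSolvable (H.map f) :=
  have : (f.comp H.incl).range = H.map f := by
    ext x
    simp
  this ▸ inferInstance

theorem isSolvable_of_derivedSeries {k : ℕ} (h : IsSolvable (derivedSeries R L k)) :
    IsSolvable L := by
  obtain ⟨l, hl⟩ := IsSolvable.solvable R (derivedSeries R L k)
  rw [LieIdeal.derivedSeries_eq_bot_iff] at hl
  apply IsSolvable.mk (R := R) (k := l + k)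
  rw [derivedSeries_def, derivedSeriesOfIdeal_add, ← derivedSeries_def, hl]

theorem isSolvable_of_forall_lie_mem {H K : LieSubalgebra R L} [IsSolvable K]
    (h : ∀ x ∈ H, ∀ y ∈ H, ⁅x, y⁆ ∈ K) : IsSolvable H := by
  have hle : (derivedSeries R H 1).toLieSubalgebra.toSubmodule ≤
      K.toSubmodule.comap H.toSubmodule.subtype := by
    rw [coe_derivedSeries_one_eq, Submodule.span_le]
    rintro _ ⟨x, y, rfl⟩
    exact h x x.2 y y.2
  have : IsSolvable (derivedSeries R H 1).toLieSubalgebra :=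
    isSolvable_of_map_le (f := H.incl) (K := K) Subtype.val_injective
      (LieSubalgebra.map_le_iff_le_comap.mpr hle)
  exact isSolvable_of_derivedSeries this

theorem isSolvable_of_range_of_ker (f : L →ₗ⁅R⁆ L') [IsSolvable f.range] [IsSolvable f.ker] :
    IsSolvable L := by
  obtain ⟨k, hk⟩ := IsSolvable.solvable R f.range
  have hker : derivedSeries R L k ≤ f.ker := by
    have h := LieIdeal.derivedSeries_map_le (f := f.rangeRestrict) k
    rw [hk, le_bot_iff, LieIdeal.map_eq_bot_iff] at h
    intro x hx
    exact congrArg Subtype.val (h hx)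
  exact isSolvable_of_derivedSeries (le_solvable_ideal_solvable hker inferInstance)

theorem isSolvable_comap (f : L →ₗ⁅R⁆ L') [IsSolvable f.ker] (K : LieSubalgebra R L')
    [IsSolvable K] : IsSolvable (K.comap f) := by
  let φ : K.comap f →ₗ⁅R⁆ L' := f.comp (K.comap f).incl
  have : IsSolvable φ.range := isSolvable_of_le (K := K) (by rintro _ ⟨x, rfl⟩; exact x.2)
  have : IsSolvable φ.ker :=
    have : IsSolvable f.ker.toLieSubalgebra := ‹IsSolvable f.ker›
    isSolvable_of_map_le (H := φ.ker.toLieSubalgebra) (f := (K.comap f).incl)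
      (K := f.ker.toLieSubalgebra) Subtype.val_injective (by rintro _ ⟨x, hx, rfl⟩; exact hx)
  exact isSolvable_of_range_of_ker φ

/-- The canonical projection `L → L ⧸ J` as a morphism of Lie algebras; Mathlib's
`LieSubmodule.Quotient.mk'` is a morphism of `L`-modules. -/
def quotientHom (J : LieIdeal R L) : L →ₗ⁅R⁆ L ⧸ J :=
  { (LieSubmodule.Quotient.mk' J : L →ₗ[R] L ⧸ J) with map_lie' := rfl }

theorem quotientHom_surjective (J : LieIdeal R L) : Function.Surjective (quotientHom J) :=
  LieSubmodule.Quotient.surjective_mk' J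

theorem ker_quotientHom (J : LieIdeal R L) : (quotientHom J).ker = J := by
  ext x
  exact LieSubmodule.Quotient.mk_eq_zero'

theorem hasTrivialRadical_quotient_radical [IsNoetherian R L] :
    HasTrivialRadical R (L ⧸ radical R L) := by
  refine hasTrivialRadical_of_no_solvable_ideals fun I hI ↦ ?_
  set π := quotientHom (radical R L)
  have : IsSolvable I.toLieSubalgebra := hI
  have : IsSolvable π.ker := by rw [ker_quotientHom]; infer_instance
  have : IsSolvable (I.toLieSubalgebra.comap π) := isSolvable_comap π _
  have hle : I.comap π ≤ radical R L := (LieIdeal.solvable_iff_le_radical R L _).mp <|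
    isSolvable_of_le (H := (I.comap π).toLieSubalgebra) (K := I.toLieSubalgebra.comap π)
      fun x hx ↦ LieIdeal.mem_comap.mp hx
  rw [LieSubmodule.eq_bot_iff]
  intro y hy
  obtain ⟨x, rfl⟩ := quotientHom_surjective (radical R L) y
  rw [← LieHom.mem_ker, ker_quotientHom]
  exact hle (LieIdeal.mem_comap.mpr hy)

end Solvable

theorem exists_lieIdeal_sup_eq_top_inf_le_radical {K L : Type*} [Field K] [CharZero K] [LieRing L]
    [LieAlgebra K L] [FiniteDimensional K L] (I : LieIdeal K L) :
    ∃ C : LieIdeal K L, I ⊔ C = ⊤ ∧ I ⊓ C ≤ radical K L := by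
  set π := quotientHom (radical K L)
  have : HasTrivialRadical K (L ⧸ radical K L) := hasTrivialRadical_quotient_radical
  have : FiniteDimensional K (L ⧸ radical K L) :=
    inferInstanceAs (FiniteDimensional K (L ⧸ (radical K L).toSubmodule))
  have hcompl := LieIdeal.isCompl_killingCompl (I.map π)
  set J := (I.map π).killingCompl K (L ⧸ radical K L)
  refine ⟨J.comap π, ?_, fun x ⟨hxI, hxJ⟩ ↦ ?_⟩
  · refine eq_top_iff.mpr fun x _ ↦ ?_
    obtain ⟨_, hy, z, hz, hyz⟩ : ∃ y ∈ I.map π, ∃ z ∈ J, y + z = π x := by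
      rw [← LieSubmodule.mem_sup, hcompl.sup_eq_top]
      trivial
    obtain ⟨⟨y, hyI⟩, rfl⟩ := LieIdeal.mem_map_of_surjective (quotientHom_surjective _) hy
    have hxy : π (x - y) ∈ J := by rwa [map_sub, ← hyz, add_sub_cancel_left]
    exact (LieSubmodule.mem_sup _ _ _).mpr
      ⟨y, hyI, x - y, LieIdeal.mem_comap.mpr hxy, add_sub_cancel _ _⟩
  · have hx : π x ∈ I.map π ⊓ J := ⟨LieIdeal.mem_map hxI, LieIdeal.mem_comap.mp hxJ⟩
    rwa [hcompl.inf_eq_bot, LieSubmodule.mem_bot, ← LieHom.mem_ker, ker_quotientHom] at hx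

section Trace

theorem isSolvable_of_killingForm_lie_eq_zero {R L : Type*} [CommRing R] [IsDomain R] [CharZero R]
    [LieRing L] [LieAlgebra R L] [IsNoetherian R L] [Free R L] (P : LieSubalgebra R L)
    (h : ∀ x ∈ P, ∀ y ∈ P, ∀ z ∈ P, killingForm R L x ⁅y, z⁆ = 0) : IsSolvable P := by
  let D := derivedSeries R P 1
  have hD (x : P) {y : P} (hy : y ∈ D) : killingForm R L x y = 0 := by
    have hle : (D.toLieSubalgebra).toSubmodule ≤
        LinearMap.ker (killingForm R L x ∘ₗ P.toSubmodule.subtype) := by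
      rw [coe_derivedSeries_one_eq, Submodule.span_le]
      rintro _ ⟨u, v, rfl⟩
      exact h x x.2 u u.2 v v.2
    exact hle hy
  have htrace : traceForm R D L = 0 := by
    ext x y
    exact hD x y.2
  have := isNilpotent_derivedSeries_of_traceForm_eq_zero htrace
  let E := derivedSeries R D 1
  have : LieRing.IsNilpotent E :=
    Function.Injective.lieModuleIsNilpotent (f := (LieHom.id : E →ₗ⁅R⁆ E)) (M₂ := L)
      (g := P.toSubmodule.subtype ∘ₗ D.toSubmodule.subtype ∘ₗ E.toSubmodule.subtype)
      (fun _ _ ↦ rfl)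
      (Subtype.val_injective.comp (Subtype.val_injective.comp Subtype.val_injective))
  have : IsSolvable E := inferInstance
  exact isSolvable_of_derivedSeries (isSolvable_of_derivedSeries this)

variable {K L V : Type*} [Field K] [CharZero K] [IsAlgClosed K] [LieRing L] [LieAlgebra K L]
  [AddCommGroup V] [Module K V] [LieRingModule L V] [LieModule K L V] [FiniteDimensional K V]

theorem exists_lieSubmodule_forall_lie_lie_eq_zero [Nontrivial V] (A : LieIdeal K L)
    [IsSolvable A] :
    ∃ W : LieSubmodule K L V, Nontrivial W ∧ ∀ x : L, ∀ a ∈ A, ∀ w ∈ W, ⁅⁅x, a⁆, w⁆ = 0 := by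
  obtain ⟨χ, hχ⟩ : ∃ χ : Dual K A, Nontrivial (weightSpace V χ) :=
    exists_nontrivial_weightSpace_of_isSolvable K A V
  let W : LieSubmodule K L V := weightSpaceOfIsLieTower K V χ
  have hW {a : L} {w : V} (ha : a ∈ A) (hw : w ∈ W) : ⁅a, w⁆ = χ ⟨a, ha⟩ • w :=
    (mem_weightSpace χ w).mp hw ⟨a, ha⟩
  refine ⟨W, hχ, fun x a ha w hw ↦ ?_⟩
  rw [lie_lie, hW ha hw, hW ha (W.lie_mem hw), lie_smul, sub_self]

theorem isNilpotent_toEnd_mul_toEnd_lie (A : LieIdeal K L) [IsSolvable A] (x y : L) {a : L}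
    (ha : a ∈ A) : IsNilpotent (toEnd K L V x * toEnd K L V ⁅y, a⁆) := by
  set f := toEnd K L V x * toEnd K L V ⁅y, a⁆
  suffices ∃ k, ∀ v ∈ (⊤ : LieSubmodule K L V), (f ^ k) v = 0 from
    this.imp fun k hk ↦ LinearMap.ext fun v ↦ hk v trivial
  refine WellFoundedGT.induction_top (P := fun N : LieSubmodule K L V ↦ ∃ k, ∀ v ∈ N, (f ^ k) v = 0)
    ⟨⊥, 0, fun v hv ↦ hv⟩ ?_
  rintro N hN ⟨k, hk⟩
  have : FiniteDimensional K (V ⧸ N) := inferInstanceAs (FiniteDimensional K (V ⧸ N.toSubmodule))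
  have : Nontrivial (V ⧸ N) := Submodule.Quotient.nontrivial_iff.mpr
    (N.toSubmodule_eq_top.not.mpr hN)
  -- The preimage of `W` is a larger `N`: one more application of `f` suffices there.
  obtain ⟨W, _, hWA⟩ := exists_lieSubmodule_forall_lie_lie_eq_zero (V := V ⧸ N) A
  refine ⟨W.comap (LieSubmodule.Quotient.mk' N), ?_, k + 1, fun v hv ↦ ?_⟩
  · obtain ⟨⟨w, hw⟩, hw0⟩ := exists_ne (0 : W)
    obtain ⟨v, rfl⟩ := LieSubmodule.Quotient.surjective_mk' N w
    refine lt_of_le_of_ne (fun n hn ↦ ?_) fun h ↦ hw0 (Subtype.ext ?_)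
    · rw [LieSubmodule.mem_comap, (LieSubmodule.Quotient.mk_eq_zero N).mpr hn]
      exact W.zero_mem
    · exact (LieSubmodule.Quotient.mk_eq_zero N).mpr (h.ge hw)
  · have hlie : ⁅⁅y, a⁆, v⁆ ∈ N := by
      rw [← LieSubmodule.Quotient.mk_eq_zero, LieModuleHom.map_lie]
      exact hWA y a ha _ hv
    rw [pow_succ, Module.End.mul_apply]
    exact hk _ (N.lie_mem hlie)

theorem traceForm_lie_eq_zero_of_mem_isSolvable (A : LieIdeal K L) [IsSolvable A] (x y : L) {a : L}
    (ha : a ∈ A) : traceForm K L V ⁅x, y⁆ a = 0 := by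
  rw [traceForm_apply_lie_apply, traceForm_apply_apply]
  exact (LinearMap.isNilpotent_trace_of_isNilpotent
    (isNilpotent_toEnd_mul_toEnd_lie A x y ha)).eq_zero

end Trace

theorem orthogonal_orthogonal_of_orthogonal_top_le {K V : Type*} [Field K] [AddCommGroup V]
    [Module K V] [FiniteDimensional K V] {F : LinearMap.BilinForm K V} (hF : F.IsRefl)
    {W : Submodule K V} (hW : F.orthogonal ⊤ ≤ W) : F.orthogonal (F.orthogonal W) = W := by
  refine (Submodule.eq_of_le_of_finrank_le
    (LinearMap.BilinForm.le_orthogonal_orthogonal hF) ?_).symm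
  have hdim := LinearMap.BilinForm.finrank_add_finrank_orthogonal hF W
  have hdim' := LinearMap.BilinForm.finrank_add_finrank_orthogonal hF (F.orthogonal W)
  rw [inf_eq_right.mpr hW] at hdim
  rw [inf_eq_right.mpr (LinearMap.BilinForm.orthogonal_le le_top)] at hdim'
  omega

theorem le_normalizer_map_incl {R L : Type*} [CommRing R] [LieRing L] [LieAlgebra R L]
    {Q : LieSubalgebra R L} (I : LieIdeal R Q) : Q ≤ (I.toLieSubalgebra.map Q.incl).normalizer := by
  intro x hx
  rw [LieSubalgebra.mem_normalizer_iff]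
  rintro _ ⟨y, hy, rfl⟩
  exact ⟨⁅⟨x, hx⟩, y⁆, I.lie_mem hy, rfl⟩

section Borel

variable {R L : Type*} [CommRing R] [LieRing L] [LieAlgebra R L]

/-- A Borel subalgebra: a maximal solvable subalgebra. -/
def IsBorel (B : LieSubalgebra R L) : Prop :=
  Maximal (fun H : LieSubalgebra R L ↦ IsSolvable H) B

/-- A parabolic subalgebra: one containing a Borel subalgebra. -/
def IsParabolic (Q : LieSubalgebra R L) : Prop :=
  ∃ B : LieSubalgebra R L, IsBorel B ∧ B ≤ Q

variable (R L) in
/-- The nilpotent radical, defined as `[L, L] ⊓ rad L`. This is the largest ideal acting nilpotently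
in every finite-dimensional representation when `R` is a field of characteristic zero and `L` is
finite-dimensional [Bourbaki, *Lie groups and Lie algebras*, I.5.3]. -/
def nilpotentRadical : LieIdeal R L := derivedSeries R L 1 ⊓ radical R L

theorem mem_span_singleton_sup_iff {V : Type*} [AddCommGroup V] [Module R V] {W : Submodule R V}
    {u x : V} : x ∈ R ∙ u ⊔ W ↔ ∃ c : R, ∃ w ∈ W, c • u + w = x := by
  simp [Submodule.mem_sup, Submodule.mem_span_singleton]

theorem lie_mem_of_mem_span_singleton_sup {B W : Submodule R L} {u : L}
    (hu : ∀ b ∈ B, ⁅b, u⁆ ∈ W) (hB : ∀ b ∈ B, ∀ c ∈ B, ⁅b, c⁆ ∈ W) {x y : L}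
    (hx : x ∈ R ∙ u ⊔ B) (hy : y ∈ R ∙ u ⊔ B) : ⁅x, y⁆ ∈ W := by
  obtain ⟨s, b, hb, rfl⟩ := mem_span_singleton_sup_iff.mp hx
  obtain ⟨t, c, hc, rfl⟩ := mem_span_singleton_sup_iff.mp hy
  have hlie : ⁅s • u + b, t • u + c⁆ = t • ⁅b, u⁆ - s • ⁅c, u⁆ + ⁅b, c⁆ := by
    rw [← lie_skew c u]
    simp only [add_lie, lie_add, smul_lie, lie_smul, lie_self, smul_zero, zero_add, smul_neg]
    abel
  rw [hlie]
  exact W.add_mem (W.sub_mem (W.smul_mem t (hu b hb)) (W.smul_mem s (hu c hc))) (hB b hb c hc)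

theorem exists_lieSubalgebra_eq_span_singleton_sup {B : LieSubalgebra R L} {u : L}
    (hu : ∀ b ∈ B, ⁅b, u⁆ ∈ R ∙ u ⊔ B.toSubmodule) :
    ∃ P : LieSubalgebra R L, P.toSubmodule = R ∙ u ⊔ B.toSubmodule :=
  (Submodule.exists_lieSubalgebra_coe_eq_iff _).mpr fun _ _ ↦
    lie_mem_of_mem_span_singleton_sup hu fun _ hb _ hc ↦ Submodule.mem_sup_right (B.lie_mem hb hc)

namespace IsBorel

variable {B : LieSubalgebra R L}

theorem mem_of_isSolvable (hB : IsBorel B) {P : LieSubalgebra R L} {u : L}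
    (hP : P.toSubmodule = R ∙ u ⊔ B.toSubmodule) (hPs : IsSolvable P) : u ∈ B := by
  have hBP : B.toSubmodule ≤ P.toSubmodule := hP ▸ le_sup_right
  have hu : u ∈ P.toSubmodule :=
    hP ▸ Submodule.mem_sup_left (Submodule.mem_span_singleton_self u)
  exact hB.le_of_ge hPs hBP hu

theorem normalizer_eq (hB : IsBorel B) : B.normalizer = B := by
  refine le_antisymm (fun u hu ↦ ?_) B.le_normalizer
  have hlie : ∀ b ∈ B, ⁅b, u⁆ ∈ B := (B.mem_normalizer_iff' u).mp hu
  obtain ⟨P, hP⟩ := exists_lieSubalgebra_eq_span_singleton_sup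
    fun b hb ↦ Submodule.mem_sup_right (hlie b hb)
  have := hB.prop
  refine hB.mem_of_isSolvable hP (isSolvable_of_forall_lie_mem (K := B) fun x hx y hy ↦ ?_)
  rw [← LieSubalgebra.mem_toSubmodule, hP] at hx hy
  exact lie_mem_of_mem_span_singleton_sup (W := B.toSubmodule) hlie (fun _ hb _ ↦ B.lie_mem hb)
    hx hy

theorem lieIdeal_le (hB : IsBorel B) (J : LieIdeal R L) [IsSolvable J] :
    J.toLieSubalgebra ≤ B := by
  let π := quotientHom J
  have hker : IsSolvable π.ker := by rwa [ker_quotientHom]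
  have := hB.prop
  have := isSolvable_map π B
  have hBπ : B ≤ (B.map π).comap π := fun b hb ↦ ⟨b, hb, rfl⟩
  refine le_trans (fun x hx ↦ ?_) (hB.le_of_ge (isSolvable_comap π (B.map π)) hBπ)
  refine ⟨0, B.zero_mem, ?_⟩
  rw [← ker_quotientHom J] at hx
  exact hx.symm

theorem comap_incl (hB : IsBorel B) {M : LieSubalgebra R L} (hM : B ≤ M) :
    IsBorel (B.comap M.incl) := by
  have := hB.prop
  refine ⟨isSolvable_of_map_le (f := M.incl) (K := B) Subtype.val_injective
    (LieSubalgebra.map_le_iff_le_comap.mpr le_rfl), fun H hH hle ↦ ?_⟩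
  have hBH : B ≤ H.map M.incl := fun b hb ↦ ⟨⟨b, hM hb⟩, hle hb, rfl⟩
  exact LieSubalgebra.map_le_iff_le_comap.mp (hB.le_of_ge (isSolvable_map M.incl H) hBH)

end IsBorel

end Borel

section CharZero

variable {K L : Type*} [Field K] [CharZero K] [LieRing L] [LieAlgebra K L] [FiniteDimensional K L]

theorem IsBorel.lieIdeal_eq_top {B : LieSubalgebra K L} (hB : IsBorel B) {I : LieIdeal K L}
    (hI : B ≤ I.toLieSubalgebra) : I = ⊤ := by
  obtain ⟨C, hsup, hinf⟩ := exists_lieIdeal_sup_eq_top_inf_le_radical I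
  have hCB : C.toLieSubalgebra ≤ B := by
    rw [← hB.normalizer_eq]
    intro c hc
    refine (B.mem_normalizer_iff c).mpr fun b hb ↦ hB.lieIdeal_le (radical K L) (hinf ?_)
    exact ⟨I.lie_mem (hI hb), lie_mem_left K L C c b hc⟩
  rwa [sup_eq_left.mpr (show C ≤ I from hCB.trans hI)] at hsup

theorem IsBorel.normalizer_eq_of_le {B Q : LieSubalgebra K L} (hB : IsBorel B) (hQ : B ≤ Q) :
    Q.normalizer = Q := by
  obtain ⟨I, hI⟩ := LieSubalgebra.exists_nested_lieIdeal_ofLe_normalizer Q.le_normalizer le_rfl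
  have hItop : I = ⊤ := by
    refine (hB.comap_incl (hQ.trans Q.le_normalizer)).lieIdeal_eq_top fun b hb ↦ ?_
    rw [hI, LieSubalgebra.mem_ofLe]
    exact hQ hb
  refine le_antisymm (fun x hx ↦ ?_) Q.le_normalizer
  have hxI : (⟨x, hx⟩ : Q.normalizer) ∈ I.toLieSubalgebra := hItop ▸ trivial
  rwa [hI, LieSubalgebra.mem_ofLe] at hxI

theorem IsParabolic.normalizer_eq {Q : LieSubalgebra K L} (hQ : IsParabolic Q) : Q.normalizer = Q :=
  let ⟨_, hB, hBQ⟩ := hQ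
  hB.normalizer_eq_of_le hBQ

end CharZero

section AlgClosed

variable {K L : Type*} [Field K] [CharZero K] [IsAlgClosed K] [LieRing L] [LieAlgebra K L]

theorem exists_mem_lie_mem_span_singleton_sup {V : Type*} [AddCommGroup V] [Module K V]
    [LieRingModule L V] [LieModule K L V] [FiniteDimensional K V] [IsSolvable L]
    {N U : LieSubmodule K L V} (h : ¬ U ≤ N) :
    ∃ u ∈ U, u ∉ N ∧ ∀ x : L, ⁅x, u⁆ ∈ K ∙ u ⊔ N.toSubmodule := by
  let π := LieSubmodule.Quotient.mk' N
  have : FiniteDimensional K (V ⧸ N) := inferInstanceAs (FiniteDimensional K (V ⧸ N.toSubmodule))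
  have : Nontrivial (U.map π) := by
    rwa [LieSubmodule.nontrivial_iff_ne_bot, ne_eq, LieSubmodule.Quotient.map_mk'_eq_bot_le]
  obtain ⟨χ, hχ⟩ := exists_nontrivial_weightSpace_of_isSolvable K L (U.map π)
  obtain ⟨⟨⟨_, u, hu, rfl⟩, hw⟩, hw0⟩ := exists_ne (0 : weightSpace (U.map π) χ)
  refine ⟨u, hu, fun huN ↦ hw0 ?_, fun x ↦ ?_⟩
  · exact Subtype.ext (Subtype.ext ((LieSubmodule.Quotient.mk_eq_zero N).mpr huN))
  · have hx : π (⁅x, u⁆ - χ x • u) = 0 := by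
      rw [map_sub, LieModuleHom.map_lie, map_smul, sub_eq_zero]
      exact congrArg Subtype.val ((mem_weightSpace _ _).mp hw x)
    exact mem_span_singleton_sup_iff.mpr
      ⟨χ x, _, (LieSubmodule.Quotient.mk_eq_zero N).mp hx, add_sub_cancel _ _⟩

variable [FiniteDimensional K L]

theorem killingForm_lie_eq_zero_of_mem_normalizer (H : LieSubalgebra K L) [IsSolvable H] {x y a : L}
    (hx : x ∈ H.normalizer) (hy : y ∈ H.normalizer) (ha : a ∈ H) :
    killingForm K L ⁅x, y⁆ a = 0 := by
  obtain ⟨A, hA⟩ := LieSubalgebra.exists_nested_lieIdeal_ofLe_normalizer H.le_normalizer le_rfl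
  have hmem (b : H.normalizer) : b ∈ A ↔ (b : L) ∈ H := by
    rw [← LieSubalgebra.mem_ofLe H.le_normalizer, ← hA]
    rfl
  have : IsSolvable A := isSolvable_of_map_le (H := A.toLieSubalgebra) (f := H.normalizer.incl)
    (K := H) Subtype.val_injective (by rintro _ ⟨b, hb, rfl⟩; exact (hmem b).mp hb)
  exact traceForm_lie_eq_zero_of_mem_isSolvable (V := L) A ⟨x, hx⟩ ⟨y, hy⟩
    (a := ⟨a, H.le_normalizer ha⟩) ((hmem _).mpr ha)

theorem killingForm_lie_eq_zero_of_mem_span_singleton_sup {B : LieSubalgebra K L} [IsSolvable B]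
    {u : L} (hu : ∀ b ∈ B, killingForm K L b u = 0) {x y z : L}
    (hx : x ∈ K ∙ u ⊔ B.toSubmodule) (hy : y ∈ K ∙ u ⊔ B.toSubmodule)
    (hz : z ∈ K ∙ u ⊔ B.toSubmodule) : killingForm K L x ⁅y, z⁆ = 0 := by
  obtain ⟨c, b, hb, rfl⟩ := mem_span_singleton_sup_iff.mp hx
  refine lie_mem_of_mem_span_singleton_sup (W := LinearMap.ker (killingForm K L (c • u + b)))
    (fun b' hb' ↦ ?_) (fun b₁ hb₁ b₂ hb₂ ↦ ?_) hy hz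
  · have huu : killingForm K L u ⁅b', u⁆ = 0 := by
      rw [traceForm_comm, traceForm_apply_lie_apply, lie_self, map_zero]
    have hbu : killingForm K L b ⁅b', u⁆ = 0 := by
      rw [← traceForm_apply_lie_apply, hu _ (B.lie_mem hb hb')]
    simp [huu, hbu]
  · have hub : killingForm K L u ⁅b₁, b₂⁆ = 0 := by
      rw [traceForm_comm, hu _ (B.lie_mem hb₁ hb₂)]
    have hbb : killingForm K L b ⁅b₁, b₂⁆ = 0 := by
      rw [traceForm_comm, killingForm_lie_eq_zero_of_mem_normalizer B (B.le_normalizer hb₁)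
        (B.le_normalizer hb₂) hb]
    simp [hub, hbb]

namespace IsBorel

variable {B : LieSubalgebra K L}

theorem orthogonal_killingForm_le (hB : IsBorel B) :
    (killingForm K L).orthogonal B.toSubmodule ≤ B.toSubmodule := by
  have := hB.prop
  let U : LieSubmodule K B L := InvariantForm.orthogonal (killingForm K L)
    (fun b x y ↦ traceForm_lieInvariant K L L b x y) B.toLieSubmodule
  by_contra hle
  obtain ⟨u, hu, huB, hlie⟩ := exists_mem_lie_mem_span_singleton_sup (N := B.toLieSubmodule)
    (U := U) hle
  obtain ⟨P, hP⟩ := exists_lieSubalgebra_eq_span_singleton_sup fun b hb ↦ hlie ⟨b, hb⟩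
  refine huB (hB.mem_of_isSolvable hP (isSolvable_of_killingForm_lie_eq_zero P ?_))
  intro x hx y hy z hz
  rw [← LieSubalgebra.mem_toSubmodule, hP] at hx hy hz
  exact killingForm_lie_eq_zero_of_mem_span_singleton_sup hu hx hy hz

end IsBorel

namespace IsParabolic

variable {Q : LieSubalgebra K L}

theorem orthogonal_killingForm_le_radical (hQ : IsParabolic Q) :
    (killingForm K L).orthogonal Q.toSubmodule ≤
      (radical K Q).toSubmodule.map Q.toSubmodule.subtype := by
  obtain ⟨B, hB, hBQ⟩ := hQ
  have := hB.prop
  let U : LieSubmodule K Q L := InvariantForm.orthogonal (killingForm K L)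
    (fun b x y ↦ traceForm_lieInvariant K L L b x y) Q.toLieSubmodule
  have hUB : U.toSubmodule ≤ B.toSubmodule :=
    (LinearMap.BilinForm.orthogonal_le hBQ).trans hB.orthogonal_killingForm_le
  let J : LieIdeal K Q := U.comap Q.toLieSubmodule.incl
  have : IsSolvable J.toLieSubalgebra := isSolvable_of_map_le (f := Q.incl) (K := B)
    Subtype.val_injective (by rintro _ ⟨b, hb, rfl⟩; exact hUB hb)
  have hJ : J ≤ radical K Q := (LieIdeal.solvable_iff_le_radical K Q J).mp this
  exact fun u hu ↦ ⟨⟨u, hBQ (hUB hu)⟩, hJ hu, rfl⟩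

theorem orthogonal_killingForm_le (hQ : IsParabolic Q) :
    (killingForm K L).orthogonal Q.toSubmodule ≤ Q.toSubmodule :=
  hQ.orthogonal_killingForm_le_radical.trans (Submodule.map_subtype_le _ _)

theorem orthogonal_orthogonal_killingForm (hQ : IsParabolic Q) :
    (killingForm K L).orthogonal ((killingForm K L).orthogonal Q.toSubmodule) = Q.toSubmodule :=
  orthogonal_orthogonal_of_orthogonal_top_le (traceForm_isSymm K L L).isRefl
    ((LinearMap.BilinForm.orthogonal_le le_top).trans hQ.orthogonal_killingForm_le)

theorem orthogonal_killingForm_derivedSeries_le (hQ : IsParabolic Q) :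
    (killingForm K L).orthogonal ((derivedSeries K Q 1).toSubmodule.map Q.toSubmodule.subtype) ≤
      Q.toSubmodule := by
  intro x hx
  rw [LieSubalgebra.mem_toSubmodule, ← hQ.normalizer_eq, LieSubalgebra.mem_normalizer_iff]
  refine fun y hy ↦ hQ.orthogonal_killingForm_le fun z hz ↦ ?_
  have hyz : ⁅y, z⁆ ∈ (derivedSeries K Q 1).toSubmodule.map Q.toSubmodule.subtype :=
    ⟨⁅⟨y, hy⟩, ⟨z, hz⟩⁆, LieSubmodule.lie_mem_lie trivial trivial, rfl⟩
  change killingForm K L z ⁅x, y⁆ = 0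
  rw [traceForm_comm, traceForm_apply_lie_apply, traceForm_comm]
  exact hx _ hyz

theorem orthogonal_killingForm_le_derivedSeries_sup (hQ : IsParabolic Q) :
    (killingForm K L).orthogonal Q.toSubmodule ≤
      (killingForm K L).orthogonal ⊤ ⊔
        (derivedSeries K Q 1).toSubmodule.map Q.toSubmodule.subtype := by
  rw [← orthogonal_orthogonal_of_orthogonal_top_le (traceForm_isSymm K L L).isRefl
    (le_sup_left : (killingForm K L).orthogonal ⊤ ≤
      _ ⊔ (derivedSeries K Q 1).toSubmodule.map Q.toSubmodule.subtype)]
  exact LinearMap.BilinForm.orthogonal_le <|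
    (LinearMap.BilinForm.orthogonal_le le_sup_right).trans
      hQ.orthogonal_killingForm_derivedSeries_le

theorem orthogonal_killingForm_le_nilpotentRadical_sup (hQ : IsParabolic Q) :
    (killingForm K L).orthogonal Q.toSubmodule ≤
      (killingForm K L).orthogonal ⊤ ⊔
        (nilpotentRadical K Q).toSubmodule.map Q.toSubmodule.subtype := by
  have hZ : (killingForm K L).orthogonal ⊤ ≤
      (radical K Q).toSubmodule.map Q.toSubmodule.subtype :=
    (LinearMap.BilinForm.orthogonal_le le_top).trans hQ.orthogonal_killingForm_le_radical
  rw [nilpotentRadical, LieSubmodule.inf_toSubmodule,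
    Submodule.map_inf _ Q.toSubmodule.injective_subtype, ← sup_inf_assoc_of_le _ hZ]
  exact le_inf hQ.orthogonal_killingForm_le_derivedSeries_sup hQ.orthogonal_killingForm_le_radical

theorem lie_mem_of_mem_normalizer_nilpotentRadical (hQ : IsParabolic Q) {x y : L}
    (hx : x ∈ ((nilpotentRadical K Q).toLieSubalgebra.map Q.incl).normalizer)
    (hy : y ∈ ((nilpotentRadical K Q).toLieSubalgebra.map Q.incl).normalizer) : ⁅x, y⁆ ∈ Q := by
  have : IsSolvable (nilpotentRadical K Q).toLieSubalgebra :=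
    le_solvable_ideal_solvable (inf_le_right : nilpotentRadical K Q ≤ radical K Q) inferInstance
  have := isSolvable_map Q.incl (nilpotentRadical K Q).toLieSubalgebra
  rw [← LieSubalgebra.mem_toSubmodule, ← hQ.orthogonal_orthogonal_killingForm]
  intro u hu
  obtain ⟨z, hz, v, hv, rfl⟩ :=
    Submodule.mem_sup.mp (hQ.orthogonal_killingForm_le_nilpotentRadical_sup hu)
  have hzxy : killingForm K L z ⁅x, y⁆ = 0 := by
    rw [traceForm_comm]
    exact hz _ trivial
  have hvxy : killingForm K L v ⁅x, y⁆ = 0 := by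
    rw [traceForm_comm]
    exact killingForm_lie_eq_zero_of_mem_normalizer _ hx hy hv
  change killingForm K L (z + v) ⁅x, y⁆ = 0
  rw [map_add, LinearMap.add_apply, hzxy, hvxy, add_zero]

end IsParabolic

theorem parabolic_eq_normalizer_of_nilpotent_radical_general {Q : LieSubalgebra K L}
    (hQ : IsParabolic Q) :
    ((nilpotentRadical K Q).toLieSubalgebra.map Q.incl).normalizer = Q := by
  have hle := le_normalizer_map_incl (nilpotentRadical K Q)
  refine le_antisymm (fun x hx ↦ ?_) hle
  rw [← hQ.normalizer_eq, LieSubalgebra.mem_normalizer_iff]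
  exact fun y hy ↦ hQ.lie_mem_of_mem_normalizer_nilpotentRadical hx (hle hy)

end AlgClosed

section Subspaces

variable {L : Type*} [LieRing L] [LieAlgebra ℂ L] {H : LieSubalgebra ℂ L}

theorem bracketSpan_map_subtype (I J : LieIdeal ℂ H) :
    bracketSpan L (I.toSubmodule.map H.toSubmodule.subtype)
      (J.toSubmodule.map H.toSubmodule.subtype) =
      (⁅I, J⁆ : LieIdeal ℂ H).toSubmodule.map H.toSubmodule.subtype := by
  rw [LieSubmodule.lieIdeal_oper_eq_linear_span', Submodule.map_span, bracketSpan]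
  congr 1
  ext z
  constructor
  · rintro ⟨_, ⟨(x : H), hx, rfl⟩, _, ⟨(y : H), hy, rfl⟩, rfl⟩
    exact ⟨⁅x, y⁆, ⟨x, hx, y, hy, rfl⟩, rfl⟩
  · rintro ⟨_, ⟨x, hx, y, hy, rfl⟩, rfl⟩
    exact ⟨_, ⟨x, hx, rfl⟩, _, ⟨y, hy, rfl⟩, rfl⟩

theorem derivedSub_toSubmodule (k : ℕ) :
    derivedSub L H.toSubmodule k =
      (derivedSeries ℂ H k).toSubmodule.map H.toSubmodule.subtype := by
  induction k with
  | zero => simp [derivedSub]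
  | succ k ih =>
    rw [derivedSub, ih, bracketSpan_map_subtype, derivedSeries_def, derivedSeries_def,
      derivedSeriesOfIdeal_succ]

theorem solvableSub_toSubmodule_iff : SolvableSub L H.toSubmodule ↔ IsSolvable H := by
  rw [SolvableSub, isSolvable_iff ℂ]
  refine exists_congr fun k ↦ ?_
  rw [derivedSub_toSubmodule, ← Submodule.map_bot H.toSubmodule.subtype,
    (Submodule.map_injective_of_injective H.toSubmodule.injective_subtype).eq_iff,
    LieSubmodule.toSubmodule_eq_bot]

theorem solvableSub_map_subtype_iff {I : LieIdeal ℂ H} :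
    SolvableSub L (I.toSubmodule.map H.toSubmodule.subtype) ↔ IsSolvable I :=
  (solvableSub_toSubmodule_iff (H := I.toLieSubalgebra.map H.incl)).trans
    (solvable_iff_equiv_solvable
      (LieSubalgebra.equivMapOfInjective H.incl I.toLieSubalgebra Subtype.val_injective)).symm

theorem isIdealIn_toSubmodule_iff {J : Submodule ℂ L} :
    IsIdealIn L H.toSubmodule J ↔
      ∃ I : LieIdeal ℂ H, I.toSubmodule.map H.toSubmodule.subtype = J := by
  refine ⟨fun ⟨hle, hlie⟩ ↦ ?_, ?_⟩
  · let I : LieIdeal ℂ H :=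
      { J.comap H.toSubmodule.subtype with lie_mem := fun {x y} hy ↦ hlie x x.2 y hy }
    exact ⟨I, (Submodule.map_comap_subtype _ _).trans (inf_eq_right.mpr hle)⟩
  · rintro ⟨I, rfl⟩
    refine ⟨Submodule.map_subtype_le _ _, ?_⟩
    rintro x hx _ ⟨y, hy, rfl⟩
    exact ⟨⁅⟨x, hx⟩, y⁆, I.lie_mem hy, rfl⟩

theorem radicalIn_toSubmodule [IsNoetherian ℂ L] :
    radicalIn L H.toSubmodule = (radical ℂ H).toSubmodule.map H.toSubmodule.subtype := by
  refine le_antisymm (sSup_le ?_) (le_sSup ⟨isIdealIn_toSubmodule_iff.mpr ⟨_, rfl⟩,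
    solvableSub_map_subtype_iff.mpr inferInstance⟩)
  rintro J ⟨hJ, hJs⟩
  obtain ⟨I, rfl⟩ := isIdealIn_toSubmodule_iff.mp hJ
  exact Submodule.map_mono ((LieIdeal.solvable_iff_le_radical ℂ H I).mp
    (solvableSub_map_subtype_iff.mp hJs))

theorem nilpotentRadIn_toSubmodule [IsNoetherian ℂ L] :
    nilpotentRadIn L H.toSubmodule =
      (nilpotentRadical ℂ H).toSubmodule.map H.toSubmodule.subtype := by
  have hD : bracketSpan L H.toSubmodule H.toSubmodule =
      (derivedSeries ℂ H 1).toSubmodule.map H.toSubmodule.subtype := derivedSub_toSubmodule 1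
  rw [nilpotentRadIn, hD, radicalIn_toSubmodule, nilpotentRadical, LieSubmodule.inf_toSubmodule,
    Submodule.map_inf _ H.toSubmodule.injective_subtype]

theorem isSub_iff_exists_lieSubalgebra {V : Submodule ℂ L} :
    IsSub L V ↔ ∃ H : LieSubalgebra ℂ L, H.toSubmodule = V :=
  ⟨fun h ↦ V.exists_lieSubalgebra_coe_eq_iff.mpr fun x y hx hy ↦ h x hx y hy,
    fun h x hx y hy ↦ V.exists_lieSubalgebra_coe_eq_iff.mp h x y hx hy⟩

theorem isBorelIn_top_toSubmodule_iff : IsBorelIn L ⊤ H.toSubmodule ↔ IsBorel H := by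
  constructor
  · rintro ⟨-, -, hs, hmax⟩
    refine ⟨solvableSub_toSubmodule_iff.mp hs, fun M hM hle ↦ ?_⟩
    exact (hmax M.toSubmodule (isSub_iff_exists_lieSubalgebra.mpr ⟨M, rfl⟩) le_top
      (solvableSub_toSubmodule_iff.mpr hM) hle).le
  · intro hH
    refine ⟨isSub_iff_exists_lieSubalgebra.mpr ⟨H, rfl⟩, le_top,
      solvableSub_toSubmodule_iff.mpr hH.prop, fun V hV _ hVs hle ↦ ?_⟩
    obtain ⟨M, rfl⟩ := isSub_iff_exists_lieSubalgebra.mp hV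
    exact le_antisymm (hH.le_of_ge (solvableSub_toSubmodule_iff.mp hVs) hle) hle

theorem isParabolicIn_top_toSubmodule_iff : IsParabolicIn L ⊤ H.toSubmodule ↔ IsParabolic H := by
  constructor
  · rintro ⟨-, -, b, hb, hle⟩
    obtain ⟨B, rfl⟩ := isSub_iff_exists_lieSubalgebra.mp hb.1
    exact ⟨B, isBorelIn_top_toSubmodule_iff.mp hb, hle⟩
  · rintro ⟨B, hB, hle⟩
    exact ⟨isSub_iff_exists_lieSubalgebra.mpr ⟨H, rfl⟩, le_top, B.toSubmodule,
      isBorelIn_top_toSubmodule_iff.mpr hB, hle⟩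

end Subspaces

/-- (1.17) in Delorme.
Every parabolic subalgebra `q` of a finite-dimensional complex reductive Lie algebra `g`
equals the normalizer in `g` of its own nilpotent radical. -/
theorem parabolic_eq_normalizer_of_nilpotent_radical
    (g : Type*) [LieRing g] [LieAlgebra ℝ g] [LieAlgebra ℂ g] [IsScalarTower ℝ ℂ g]
    [FiniteDimensional ℂ g] [FiniteDimensional ℝ g]
    (hred : IsReductive g)
    (q : Submodule ℂ g) (hq : IsParabolicIn g ⊤ q) :
    ∀ x : g, x ∈ q ↔ ∀ w ∈ nilpotentRadIn g q, ⁅x, w⁆ ∈ nilpotentRadIn g q := by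
  obtain ⟨Q, rfl⟩ := isSub_iff_exists_lieSubalgebra.mp hq.1
  intro x
  rw [nilpotentRadIn_toSubmodule]
  have hx := LieSubalgebra.mem_normalizer_iff ((nilpotentRadical ℂ Q).toLieSubalgebra.map Q.incl) x
  rwa [parabolic_eq_normalizer_of_nilpotent_radical_general
    (isParabolicIn_top_toSubmodule_iff.mp hq)] at hx

end ManinPaper
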